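/- Let A ∈ SL₂(ℤ) have trace greater than 2, let λ > 1 be its larger eigenvalue, and set p = log λ. Suppose M = [[α, β],[γ, δ]] ∈ SL₂(ℝ) satisfies A·M = M·diag(λ, λ⁻¹). Let ℤ² ⋊_A ℤ be the semidirect product in which m ∈ ℤ acts on ℤ² by v ↦ A^m·v. Then the map sending ((k,l), m) ∈ ℤ² ⋊_A ℤ to the 3×3 matrix [[e^{pm}, δk − βl, 0],[0, 1, 0],[0, −γk + αl, e^{−pm}]] is an injective group homomorphism into GL₃(ℝ) whose image lies in S(p,p); moreover, the image is a discrete subgroup of S(p,p), and it is cocompact: there is a compact subset K of S(p,p) such that every element of S(p,p) is the product of an element of the image with an element of K. -/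

import Mathlib

/-- The matrix `[[e^{pc}, a, 0], [0, 1, 0], [0, b, e^{-qc}]]`. -/
noncomputable def solMat (p q a b c : ℝ) : Matrix (Fin 3) (Fin 3) ℝ :=
  !![Real.exp (p * c), a, 0; 0, 1, 0; 0, b, Real.exp (-q * c)]

/-- The set of matrices constituting the group `S(p,q)`. -/
def solSet (p q : ℝ) : Set (Matrix (Fin 3) (Fin 3) ℝ) :=
  { M | ∃ a b c : ℝ, M = solMat p q a b c }

/-- The action of the group element with parameters `g = (a,b,c)` on `ℝ³`:
`(a,b,c)·(x,y,z) = (e^{pc}x + a, e^{-qc}y + b, c + z)`. -/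
noncomputable def solAct (p q : ℝ) (g u : ℝ × ℝ × ℝ) : ℝ × ℝ × ℝ :=
  (Real.exp (p * g.2.2) * u.1 + g.1, Real.exp (-q * g.2.2) * u.2.1 + g.2.1, g.2.2 + u.2.2)

/-
`S(p,q)` is the semidirect product of `ℝ²` by the flow `diag(e^{pc}, e^{-qc})`. An invertible `P`
conjugating `A` into the time-one map of this flow carries `ℤ² ⋊_A ℤ ⊆ ℝ² × ℝ` to a subgroup, and
`(x, t) ↦ (P x, t)` is a topological embedding of `ℝ² × ℝ` with image all of `S(p,q)`. Discreteness
of the subgroup is thus that of `ℤ² × ℤ` in `ℝ² × ℝ`, and the image of the unit cube is a compact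
set of coset representatives: first split off `⌊t⌋`, then the integer part of `A^{-⌊t⌋} x`.
For a matrix `M` of eigenvectors of `A` one takes `P = M⁻¹`.
-/

open Matrix Real Topology

/-- The flow `c ↦ diag(e^{pc}, e^{-qc})` on the plane through which `S(p,q)` is the semidirect
product `ℝ² ⋊ ℝ`. Time is written multiplicatively so that the flow is a monoid homomorphism. -/
noncomputable def solFlow (p q : ℝ) : Multiplicative ℝ →* Matrix (Fin 2) (Fin 2) ℝ where
  toFun c := diagonal ![exp (p * c.toAdd), exp (-q * c.toAdd)]
  map_one' := by
    ext i j
    fin_cases i <;> fin_cases j <;> simp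
  map_mul' c d := by
    ext i j
    fin_cases i <;> fin_cases j <;> simp [mul_add, exp_add]

/-- The parametrization of `S(p,q)` by `ℝ² × ℝ` in which the translation part has been subjected to
the linear change of coordinates `P`. -/
noncomputable def solChart (p q : ℝ) (P : Matrix (Fin 2) (Fin 2) ℝ) (u : (Fin 2 → ℝ) × ℝ) :
    Matrix (Fin 3) (Fin 3) ℝ :=
  solMat p q ((P *ᵥ u.1) 0) ((P *ᵥ u.1) 1) u.2

/-- The restriction of `solChart p q P` to the integer points `ℤ² × ℤ`. -/
noncomputable def solLatticeMap (p q : ℝ) (P : Matrix (Fin 2) (Fin 2) ℝ) (g : (Fin 2 → ℤ) × ℤ) :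
    Matrix (Fin 3) (Fin 3) ℝ :=
  solChart p q P ((↑) ∘ g.1, g.2)

theorem semiconjBy_nonsing_inv {n R : Type*} [Fintype n] [DecidableEq n] [CommRing R]
    {M X Y : Matrix n n R} (hM : IsUnit M) (h : SemiconjBy M X Y) : SemiconjBy M⁻¹ Y X := by
  obtain ⟨u, rfl⟩ := hM
  rw [← coe_units_inv]
  exact h.units_inv_symm_left

theorem intCast_comp_mulVec {m n R : Type*} [Fintype n] [Ring R] (B : Matrix m n ℤ) (v : n → ℤ) :
    ((↑) : ℤ → R) ∘ (B *ᵥ v) = B.map (↑) *ᵥ ((↑) ∘ v) :=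
  funext (RingHom.map_mulVec (Int.castRingHom R) B v)

theorem solFlow_mulVec (p q c : ℝ) (w : Fin 2 → ℝ) :
    solFlow p q (.ofAdd c) *ᵥ w = ![exp (p * c) * w 0, exp (-q * c) * w 1] := by
  ext i
  fin_cases i <;> simp [solFlow, mulVec_diagonal]

theorem solFlow_log_one {lam mu : ℝ} (hlam : 0 < lam) (hmu : 0 < mu) :
    solFlow (log lam) (log mu) (.ofAdd 1) = diagonal ![lam, mu⁻¹] := by
  simp [solFlow, exp_neg, exp_log hlam, exp_log hmu]

theorem semiconjBy_nonsing_inv_solFlow_log {lam mu : ℝ} (hlam : 0 < lam) (hmu : 0 < mu)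
    {B M : Matrix (Fin 2) (Fin 2) ℝ} (hM : IsUnit M) (h : B * M = M * diagonal ![lam, mu⁻¹]) :
    SemiconjBy M⁻¹ B (solFlow (log lam) (log mu) (.ofAdd 1)) := by
  rw [solFlow_log_one hlam hmu]
  exact semiconjBy_nonsing_inv hM h.symm

theorem solMat_mul (p q a b c a' b' c' : ℝ) :
    solMat p q a b c * solMat p q a' b' c' =
      solMat p q (a + exp (p * c) * a') (b + exp (-q * c) * b') (c + c') := by
  ext i j
  fin_cases i <;> fin_cases j <;>
    simp [solMat, mul_apply, Fin.sum_univ_three, mul_add, exp_add, add_comm]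

theorem solLatticeMap_nonsing_inv (p q : ℝ) {M : Matrix (Fin 2) (Fin 2) ℝ} (hM : M.det = 1)
    (g : (Fin 2 → ℤ) × ℤ) :
    solLatticeMap p q M⁻¹ g =
      solMat p q (M 1 1 * g.1 0 - M 0 1 * g.1 1) (-(M 1 0) * g.1 0 + M 0 0 * g.1 1) g.2 := by
  simp [solLatticeMap, solChart, inv_def, hM, adjugate_fin_two, mulVec_eq_sum, sub_eq_add_neg]

section

variable {p q : ℝ} {P : Matrix (Fin 2) (Fin 2) ℝ}

theorem solChart_mem_solSet (u : (Fin 2 → ℝ) × ℝ) : solChart p q P u ∈ solSet p q :=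
  ⟨_, _, _, rfl⟩

theorem range_solChart (hP : IsUnit P) : Set.range (solChart p q P) = solSet p q := by
  refine (Set.range_subset_iff.mpr solChart_mem_solSet).antisymm ?_
  rintro _ ⟨a, b, c, rfl⟩
  obtain ⟨x, hx⟩ := mulVec_surjective_iff_isUnit.mpr hP ![a, b]
  exact ⟨(x, c), by simp [solChart, hx]⟩

theorem solChart_mul_solChart {B : Matrix (Fin 2) (Fin 2) ℝ} {c : ℝ}
    (hB : SemiconjBy P B (solFlow p q (.ofAdd c))) (x y : Fin 2 → ℝ) (t : ℝ) :
    solChart p q P (x, c) * solChart p q P (y, t) = solChart p q P (x + B *ᵥ y, c + t) := by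
  have hPy : P *ᵥ (B *ᵥ y) = ![exp (p * c) * (P *ᵥ y) 0, exp (-q * c) * (P *ᵥ y) 1] := by
    rw [mulVec_mulVec, hB.eq, ← mulVec_mulVec, solFlow_mulVec]
  simp only [solChart, solMat_mul, mulVec_add, hPy, Pi.add_apply, cons_val]

theorem continuous_solChart : Continuous (solChart p q P) := by
  unfold solChart solMat
  fun_prop

theorem isEmbedding_solChart (hp : p ≠ 0) (hP : IsUnit P) : IsEmbedding (solChart p q P) := by
  have translation_part : IsEmbedding (P *ᵥ ·) :=
    (LinearMap.isClosedEmbedding_of_injective (f := P.mulVecLin)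
      (LinearMap.ker_eq_bot.mpr (mulVec_injective_of_isUnit hP))).isEmbedding
  have time_part : IsEmbedding fun c => exp (p * c) :=
    isOpenEmbedding_exp.isEmbedding.comp (Homeomorph.mulLeft₀ p hp).isEmbedding
  refine .of_comp continuous_solChart
    (g := fun N : Matrix (Fin 3) (Fin 3) ℝ => (![N 0 1, N 2 1], N 0 0)) (by fun_prop) ?_
  convert translation_part.prodMap time_part using 1
  refine funext fun u => Prod.ext (funext fun i => ?_) rfl
  fin_cases i <;> rfl

theorem isEmbedding_solLatticeMap (hp : p ≠ 0) (hP : IsUnit P) :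
    IsEmbedding (solLatticeMap p q P) :=
  have cast_embedding : IsEmbedding ((↑) : ℤ → ℝ) := Int.isClosedEmbedding_coe_real.isEmbedding
  (isEmbedding_solChart hp hP).comp <|
    (IsEmbedding.piMap fun _ : Fin 2 => cast_embedding).prodMap cast_embedding

theorem semiconjBy_map_zpow_solFlow {A : SpecialLinearGroup (Fin 2) ℤ}
    (hA : SemiconjBy P (A.1.map (↑)) (solFlow p q (.ofAdd 1))) (m : ℤ) :
    SemiconjBy P ((A ^ m).1.map (↑)) (solFlow p q (.ofAdd m)) := by
  have hm := SemiconjBy.units_zpow_right (x := SpecialLinearGroup.mapGL ℝ A)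
    (y := (solFlow p q).toHomUnits (.ofAdd 1)) hA m
  rwa [← map_zpow, ← map_zpow, ← ofAdd_zsmul, zsmul_one] at hm

theorem solLatticeMap_mul_solChart {A : SpecialLinearGroup (Fin 2) ℤ}
    (hA : SemiconjBy P (A.1.map (↑)) (solFlow p q (.ofAdd 1))) (v : Fin 2 → ℤ) (m : ℤ)
    (y : Fin 2 → ℝ) (t : ℝ) :
    solLatticeMap p q P (v, m) * solChart p q P (y, t) =
      solChart p q P ((↑) ∘ v + (A ^ m).1.map (↑) *ᵥ y, m + t) :=
  solChart_mul_solChart (semiconjBy_map_zpow_solFlow hA m) _ y t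

theorem solLatticeMap_mul_solLatticeMap {A : SpecialLinearGroup (Fin 2) ℤ}
    (hA : SemiconjBy P (A.1.map (↑)) (solFlow p q (.ofAdd 1))) (v v' : Fin 2 → ℤ) (m m' : ℤ) :
    solLatticeMap p q P (v, m) * solLatticeMap p q P (v', m') =
      solLatticeMap p q P (v + (A ^ m).1 *ᵥ v', m + m') := by
  have hcast : ((↑) : ℤ → ℝ) ∘ (v + (A ^ m).1 *ᵥ v') =
      (↑) ∘ v + (A ^ m).1.map (↑) *ᵥ ((↑) ∘ v') := by
    rw [← intCast_comp_mulVec]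
    exact funext fun _ => Int.cast_add _ _
  simp only [solLatticeMap, hcast, Int.cast_add]
  exact solLatticeMap_mul_solChart hA v m _ m'

theorem exists_isCompact_forall_eq_solLatticeMap_mul {A : SpecialLinearGroup (Fin 2) ℤ}
    (hP : IsUnit P) (hA : SemiconjBy P (A.1.map (↑)) (solFlow p q (.ofAdd 1))) :
    ∃ K : Set (Matrix (Fin 3) (Fin 3) ℝ), IsCompact K ∧ K ⊆ solSet p q ∧
      ∀ g ∈ solSet p q, ∃ h ∈ Set.range (solLatticeMap p q P), ∃ k ∈ K, g = h * k := by
  refine ⟨solChart p q P '' Set.Icc 0 1, isCompact_Icc.image continuous_solChart,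
    Set.image_subset_iff.mpr fun u _ => solChart_mem_solSet u, ?_⟩
  rw [← range_solChart hP]
  rintro _ ⟨⟨x, t⟩, rfl⟩
  obtain ⟨y, rfl⟩ : ∃ y, (A ^ ⌊t⌋).1.map (↑) *ᵥ y = x :=
    mulVec_surjective_iff_isUnit.mpr (SpecialLinearGroup.mapGL ℝ (A ^ ⌊t⌋)).isUnit x
  refine ⟨_, ⟨((A ^ ⌊t⌋).1 *ᵥ fun i => ⌊y i⌋, ⌊t⌋), rfl⟩,
    _, ⟨(fun i => Int.fract (y i), Int.fract t), ?_, rfl⟩, ?_⟩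
  · exact ⟨⟨fun i => Int.fract_nonneg _, Int.fract_nonneg _⟩,
      ⟨fun i => (Int.fract_lt_one _).le, (Int.fract_lt_one _).le⟩⟩
  · have hy : ((↑) ∘ fun i => ⌊y i⌋) + (fun i => Int.fract (y i)) = y :=
      funext fun i => Int.floor_add_fract (y i)
    rw [solLatticeMap_mul_solChart hA, intCast_comp_mulVec, ← mulVec_add, hy,
      Int.floor_add_fract]

end

theorem stmt17_general {A : SpecialLinearGroup (Fin 2) ℤ} {p q : ℝ}
    {P : Matrix (Fin 2) (Fin 2) ℝ} (hp : p ≠ 0) (hP : IsUnit P)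
    (hA : SemiconjBy P (A.1.map (↑)) (solFlow p q (.ofAdd 1))) :
    (∀ (v v' : Fin 2 → ℤ) (m m' : ℤ),
        solLatticeMap p q P (v + (A ^ m).1 *ᵥ v', m + m') =
          solLatticeMap p q P (v, m) * solLatticeMap p q P (v', m')) ∧
    Function.Injective (solLatticeMap p q P) ∧
    (∀ g, solLatticeMap p q P g ∈ solSet p q) ∧
    DiscreteTopology (Set.range (solLatticeMap p q P)) ∧
    (∃ K : Set (Matrix (Fin 3) (Fin 3) ℝ), IsCompact K ∧ K ⊆ solSet p q ∧
      ∀ g ∈ solSet p q, ∃ h ∈ Set.range (solLatticeMap p q P), ∃ k ∈ K, g = h * k) :=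
  ⟨fun v v' m m' => (solLatticeMap_mul_solLatticeMap hA v v' m m').symm,
    (isEmbedding_solLatticeMap hp hP).injective,
    fun _ => solChart_mem_solSet _,
    (isEmbedding_solLatticeMap hp hP).isDiscrete_range.to_subtype,
    exists_isCompact_forall_eq_solLatticeMap_mul hP hA⟩

theorem stmt17 (A : Matrix.SpecialLinearGroup (Fin 2) ℤ)
    (htr : 2 < Matrix.trace (A : Matrix (Fin 2) (Fin 2) ℤ))
    (lam : ℝ) (hlam : 1 < lam)
    (hev : lam ^ 2 - (Int.cast (Matrix.trace (A : Matrix (Fin 2) (Fin 2) ℤ)) : ℝ) * lam + 1 = 0)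
    (M : Matrix (Fin 2) (Fin 2) ℝ) (hM : M.det = 1)
    (hdiag : ((A : Matrix (Fin 2) (Fin 2) ℤ).map (Int.cast : ℤ → ℝ)) * M
        = M * Matrix.diagonal ![lam, lam⁻¹]) :
    let p : ℝ := Real.log lam
    let θ : (Fin 2 → ℤ) × ℤ → Matrix (Fin 3) (Fin 3) ℝ := fun g =>
      solMat p p (M 1 1 * (g.1 0 : ℝ) - M 0 1 * (g.1 1 : ℝ))
        (-(M 1 0) * (g.1 0 : ℝ) + M 0 0 * (g.1 1 : ℝ)) (g.2 : ℝ)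
    (∀ (v v' : Fin 2 → ℤ) (m m' : ℤ),
        θ (v + ((A ^ m : Matrix.SpecialLinearGroup (Fin 2) ℤ) : Matrix (Fin 2) (Fin 2) ℤ).mulVec v',
            m + m')
          = θ (v, m) * θ (v', m')) ∧
    Function.Injective θ ∧
    (∀ g : (Fin 2 → ℤ) × ℤ, θ g ∈ solSet p p) ∧
    DiscreteTopology (Set.range θ) ∧
    (∃ K : Set (Matrix (Fin 3) (Fin 3) ℝ), IsCompact K ∧ K ⊆ solSet p p ∧
      ∀ g ∈ solSet p p, ∃ h ∈ Set.range θ, ∃ k ∈ K, g = h * k) := by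
  intro p θ
  have hM_unit : IsUnit M := (isUnit_iff_isUnit_det M).mpr (hM ▸ isUnit_one)
  have hlam_pos : 0 < lam := one_pos.trans hlam
  rw [show θ = solLatticeMap p p M⁻¹ from
    funext fun g => (solLatticeMap_nonsing_inv p p hM g).symm]
  exact stmt17_general (log_pos hlam).ne' (isUnit_nonsing_inv_iff.mpr hM_unit)
    (semiconjBy_nonsing_inv_solFlow_log hlam_pos hlam_pos hM_unit hdiag)
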